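/- Finite model property of S4D: for every bimodal formula A, A ∈ S4D if and only if F ⊨ A for every finite S4D-frame F. -/

import Mathlib

/-!
Soundness is an induction on derivations: each axiom corresponds to a condition in `IsS4DFrame`.

For completeness, a formula `A` outside S4D is omitted by some maximal consistent theory `x₀`
(`Theory.lindenbaum`). On maximal consistent theories, the canonical relations `canR`, `canD`
satisfy all the conditions of an S4D-frame; the conditions involving equality
(`canD_ptrans`, `canR_inc`) are obtained by picking a formula `C` that separates two
distinct theories and boxing `B ∨ C` instead of `B`.

The cluster `comp x₀ = {x₀} ∪ canD(x₀)` is closed under both relations and any two distinct points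
of it are `canD`-related. Filtrating it through the subformulas of `A` gives a finite model:
points are the traces on the subformulas, `□` gets the transitive (Lemmon) filtration and `[≠]` the
minimal one. Distinct traces have distinct representatives, so distinct points of the filtration
are always related by the difference relation, which makes pseudo-transitivity and the inclusion
`R ⊆ R_D ∪ Id` immediate. The truth lemma `filt_truth` then refutes `A` at the trace of `x₀`.
-/

/-- Bimodal formulas: propositional letters, falsum, implication, box, and
the difference modality `[≠]` (called `dbox` here). -/
inductive BForm : Type
  | var : ℕ → BForm
  | bot : BForm
  | imp : BForm → BForm → BForm
  | box : BForm → BForm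
  | dbox : BForm → BForm
  deriving DecidableEq

namespace BForm

/-- Classical negation. -/
def neg (A : BForm) : BForm := imp A bot

/-- Classical conjunction. -/
def conj (A B : BForm) : BForm := neg (imp A (neg B))

/-- `◇A = ¬□¬A`. -/
def dia (A : BForm) : BForm := neg (box (neg A))

/-- `⟨≠⟩A = ¬[≠]¬A`. -/
def ddia (A : BForm) : BForm := neg (dbox (neg A))

end BForm

/-- Truth at a point of a Kripke model over a frame `(W, R, R_D)`. -/
def ksat {W : Type} (R RD : W → W → Prop) (θ : ℕ → Set W) : W → BForm → Prop
  | x, .var n => x ∈ θ n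
  | _, .bot => False
  | x, .imp A B => ksat R RD θ x A → ksat R RD θ x B
  | x, .box A => ∀ y, R x y → ksat R RD θ y A
  | x, .dbox A => ∀ y, RD x y → ksat R RD θ y A

/-- Validity in a Kripke frame: truth at every point under every valuation. -/
def kvalid {W : Type} (R RD : W → W → Prop) (A : BForm) : Prop :=
  ∀ (θ : ℕ → Set W) (x : W), ksat R RD θ x A

/-- Truth at a point of a topological model. -/
def tsat {X : Type} [TopologicalSpace X] (θ : ℕ → Set X) : X → BForm → Prop
  | x, .var n => x ∈ θ n
  | _, .bot => False
  | x, .imp A B => tsat θ x A → tsat θ x B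
  | x, .box A => ∃ U : Set X, IsOpen U ∧ x ∈ U ∧ ∀ y ∈ U, tsat θ y A
  | x, .dbox A => ∀ y, y ≠ x → tsat θ y A

/-- Validity in a topological space. -/
def tvalid (X : Type) [TopologicalSpace X] (A : BForm) : Prop :=
  ∀ (θ : ℕ → Set X) (x : X), tsat θ x A

/-- Uniform substitution of formulas for propositional letters. -/
def substF (σ : ℕ → BForm) : BForm → BForm
  | .var n => σ n
  | .bot => .bot
  | .imp A B => .imp (substF σ A) (substF σ B)
  | .box A => .box (substF σ A)
  | .dbox A => .dbox (substF σ A)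

/-- Boolean evaluation of a formula, treating letters and modal formulas as atoms. -/
def beval (v : BForm → Bool) : BForm → Bool
  | .var n => v (.var n)
  | .bot => false
  | .imp A B => !(beval v A) || beval v B
  | .box A => v (.box A)
  | .dbox A => v (.dbox A)

/-- A classical tautology of the bimodal language. -/
def Tautology (A : BForm) : Prop := ∀ v : BForm → Bool, beval v A = true

/-- The letter `p`. -/
def pLet : BForm := .var 0
/-- The letter `q`. -/
def qLet : BForm := .var 1

/-- The least bimodal logic containing `K₂`, the S4D axioms and the extra axioms `Ax`,
closed under modus ponens, uniform substitution, and both necessitation rules. -/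
inductive Logic (Ax : Set BForm) : BForm → Prop
  | taut {A : BForm} : Tautology A → Logic Ax A
  | axKBox : Logic Ax (.imp (.box (.imp pLet qLet)) (.imp (.box pLet) (.box qLet)))
  | axKD : Logic Ax (.imp (.dbox (.imp pLet qLet)) (.imp (.dbox pLet) (.dbox qLet)))
  | axBD : Logic Ax (.imp pLet (.dbox (BForm.ddia pLet)))
  | ax4mD : Logic Ax (.imp (BForm.conj pLet (.dbox pLet)) (.dbox (.dbox pLet)))
  | axTBox : Logic Ax (.imp (.box pLet) pLet)
  | ax4Box : Logic Ax (.imp (.box pLet) (.box (.box pLet)))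
  | axDBox : Logic Ax (.imp (BForm.conj (.dbox pLet) pLet) (.box pLet))
  | extra {A : BForm} : A ∈ Ax → Logic Ax A
  | mp {A B : BForm} : Logic Ax (.imp A B) → Logic Ax A → Logic Ax B
  | subst {A : BForm} (σ : ℕ → BForm) : Logic Ax A → Logic Ax (substF σ A)
  | necBox {A : BForm} : Logic Ax A → Logic Ax (.box A)
  | necD {A : BForm} : Logic Ax A → Logic Ax (.dbox A)

/-- The axiom (DS): `[≠]p → ◇p`. -/
def dsAx : BForm := .imp (.dbox pLet) (BForm.dia pLet)

/-- The axiom (AT₁): `[≠]p → [≠]□p`. -/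
def at1Ax : BForm := .imp (.dbox pLet) (.dbox (.box pLet))

/-- The logic S4D. -/
def S4D : BForm → Prop := Logic ∅

/-- The logic S4DS = S4D + (DS). -/
def S4DS : BForm → Prop := Logic {dsAx}

/-- The logic S4DT1S = S4DS + (AT₁). -/
def S4DT1S : BForm → Prop := Logic {dsAx, at1Ax}

/-- `(W, R, R_D)` is an S4D-frame: `R` is reflexive and transitive, `R_D` is
symmetric and pseudo-transitive, and `R ⊆ R_D ∪ Id`. -/
structure IsS4DFrame {W : Type} (R RD : W → W → Prop) : Prop where
  refl : ∀ x, R x x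
  trans : ∀ ⦃x y z⦄, R x y → R y z → R x z
  symm : ∀ ⦃x y⦄, RD x y → RD y x
  ptrans : ∀ ⦃x y z⦄, RD x y → RD y z → x ≠ z → RD x z
  inc : ∀ ⦃x y⦄, R x y → RD x y ∨ x = y

/-- A T₁-frame: every `R_D`-irreflexive point is `R`-minimal. -/
def IsT1Frame {W : Type} (R RD : W → W → Prop) : Prop :=
  ∀ x, ¬ RD x x → ∀ y, R y x → y = x

/-- A DS-frame: every `R_D`-irreflexive point has an `R`-successor distinct from itself. -/
def IsDSFrame {W : Type} (R RD : W → W → Prop) : Prop :=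
  ∀ x, ¬ RD x x → ∃ y, y ≠ x ∧ R x y

/-- A cd-p-morphism from a topological space `X` onto a Kripke frame `(W, R, R_D)`. -/
structure IsCdPMorphism {X : Type} [TopologicalSpace X] {W : Type}
    (R RD : W → W → Prop) (f : X → W) : Prop where
  surj : Function.Surjective f
  cl : ∀ w : W, closure (f ⁻¹' {w}) = f ⁻¹' {v | R v w}
  diff : ∀ w : W, {x : X | ∃ y, y ≠ x ∧ f y = w} = f ⁻¹' {v | RD v w}

/-- A p-morphism between Kripke frames. -/
structure IsPMorphism {W W' : Type} (R RD : W → W → Prop) (R' RD' : W' → W' → Prop)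
    (f : W → W') : Prop where
  surj : Function.Surjective f
  forth : ∀ ⦃x y⦄, R x y → R' (f x) (f y)
  forthD : ∀ ⦃x y⦄, RD x y → RD' (f x) (f y)
  back : ∀ x z, R' (f x) z → ∃ y, R x y ∧ f y = z
  backD : ∀ x z, RD' (f x) z → ∃ y, RD x y ∧ f y = z

/-- The Alexandrov topology on `W` whose open sets are the `R`-upward-closed sets. -/
def alexandrov {W : Type} (R : W → W → Prop) : TopologicalSpace W where
  IsOpen U := ∀ ⦃x⦄, x ∈ U → ∀ ⦃y⦄, R x y → y ∈ U
  isOpen_univ := fun _ _ _ _ => trivial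
  isOpen_inter := fun _ _ hU hV x hx y hxy => ⟨hU hx.1 hxy, hV hx.2 hxy⟩
  isOpen_sUnion := fun _ hS x hx y hxy => by
    obtain ⟨U, hU, hxU⟩ := hx
    exact ⟨U, hU, hS U hU hxU hxy⟩

open BForm

/-! ### Soundness -/

theorem ksat_substF {W : Type} (R RD : W → W → Prop) (θ : ℕ → Set W) (σ : ℕ → BForm) (A : BForm) :
    ∀ x, ksat R RD θ x (substF σ A) ↔ ksat R RD (fun n => {w | ksat R RD θ w (σ n)}) x A := by
  induction A with
  | var n => intro x; rfl
  | bot => intro x; rfl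
  | imp A B ihA ihB => intro x; simp only [substF, ksat, ihA, ihB]
  | box A ih => intro x; simp only [substF, ksat, ih]
  | dbox A ih => intro x; simp only [substF, ksat, ih]

open Classical in
theorem beval_ksat {W : Type} (R RD : W → W → Prop) (θ : ℕ → Set W) (x : W) (A : BForm) :
    beval (fun B => decide (ksat R RD θ x B)) A = true ↔ ksat R RD θ x A := by
  induction A with
  | var n => simp [beval]
  | bot => simp [beval, ksat]
  | imp A B ihA ihB =>
    simp only [beval, ksat, ← ihA, ← ihB, Bool.or_eq_true, Bool.not_eq_true']
    cases beval (fun B => decide (ksat R RD θ x B)) A <;> simp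
  | box A _ => simp [beval]
  | dbox A _ => simp [beval]

theorem ksat_conj {W : Type} {R RD : W → W → Prop} {θ : ℕ → Set W} {x : W} {A B : BForm} :
    ksat R RD θ x (conj A B) ↔ ksat R RD θ x A ∧ ksat R RD θ x B := by
  simp only [conj, neg, ksat]
  tauto

theorem s4d_sound {W : Type} {R RD : W → W → Prop} (hF : IsS4DFrame R RD) {A : BForm}
    (h : S4D A) : kvalid R RD A := by
  unfold S4D at h
  induction h with
  | taut h => intro θ x; exact (beval_ksat R RD θ x _).1 (h _)
  | axKBox => intro θ x h1 h2 y hy; exact h1 y hy (h2 y hy)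
  | axKD => intro θ x h1 h2 y hy; exact h1 y hy (h2 y hy)
  | axBD => intro θ x h1 y hy h2; exact h2 x (hF.symm hy) h1
  | ax4mD =>
    intro θ x h1 y hy z hz
    obtain ⟨h1, h2⟩ := ksat_conj.1 h1
    by_cases hxz : x = z
    · exact hxz ▸ h1
    · exact h2 z (hF.ptrans hy hz hxz)
  | axTBox => intro θ x h; exact h x (hF.refl x)
  | ax4Box => intro θ x h y hy z hz; exact h z (hF.trans hy hz)
  | axDBox =>
    intro θ x h1 y hy
    obtain ⟨h1, h2⟩ := ksat_conj.1 h1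
    rcases hF.inc hy with h | h
    · exact h1 y h
    · exact h ▸ h2
  | extra h => exact h.elim
  | mp _ _ ih1 ih2 => intro θ x; exact ih1 θ x (ih2 θ x)
  | subst σ _ ih => intro θ x; exact (ksat_substF R RD θ σ _ x).2 (ih _ x)
  | necBox _ ih => intro θ x y _; exact ih θ y
  | necD _ ih => intro θ x y _; exact ih θ y

/-! ### Axiom schemes -/

/-- The substitution sending the letters `p`, `q` to `A`, `B`. -/
def sub2 (A B : BForm) : ℕ → BForm
  | 0 => A
  | _ => B

theorem s4d_KBox (A B : BForm) : S4D (.imp (.box (.imp A B)) (.imp (.box A) (.box B))) :=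
  Logic.subst (sub2 A B) Logic.axKBox

theorem s4d_KD (A B : BForm) : S4D (.imp (.dbox (.imp A B)) (.imp (.dbox A) (.dbox B))) :=
  Logic.subst (sub2 A B) Logic.axKD

theorem s4d_BD (A : BForm) : S4D (.imp A (.dbox (ddia A))) :=
  Logic.subst (sub2 A A) Logic.axBD

theorem s4d_4mD (A : BForm) : S4D (.imp (conj A (.dbox A)) (.dbox (.dbox A))) :=
  Logic.subst (sub2 A A) Logic.ax4mD

theorem s4d_TBox (A : BForm) : S4D (.imp (.box A) A) :=
  Logic.subst (sub2 A A) Logic.axTBox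

theorem s4d_4Box (A : BForm) : S4D (.imp (.box A) (.box (.box A))) :=
  Logic.subst (sub2 A A) Logic.ax4Box

theorem s4d_DBox (A : BForm) : S4D (.imp (conj (.dbox A) A) (.box A)) :=
  Logic.subst (sub2 A A) Logic.axDBox

/-! ### Maximal consistent theories -/

/-- A theory: a set of formulas containing S4D and closed under modus ponens
(but not necessarily under necessitation). -/
structure Theory (T : Set BForm) : Prop where
  thm : ∀ {A}, S4D A → A ∈ T
  mp : ∀ {A B}, imp A B ∈ T → A ∈ T → B ∈ T

/-- A maximal consistent theory. -/
structure MCS (T : Set BForm) : Prop extends Theory T where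
  cons : bot ∉ T
  compl : ∀ A, A ∈ T ∨ neg A ∈ T

theorem Theory.taut {T : Set BForm} (h : Theory T) {A : BForm} (hA : Tautology A) : A ∈ T :=
  h.thm (Logic.taut hA)

/-- By the deduction theorem, the theory generated by `T` and `C` is `{D | C → D ∈ T}`. -/
theorem Theory.adjoin {T : Set BForm} (h : Theory T) (C : BForm) : Theory {D | imp C D ∈ T} where
  thm {A} hA := h.mp (h.taut (A := imp A (imp C A)) (by
    intro v; simp only [beval]; cases beval v A <;> cases beval v C <;> rfl)) (h.thm hA)
  mp {A B} h1 h2 := h.mp (h.mp (h.taut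
    (A := imp (imp C (imp A B)) (imp (imp C A) (imp C B))) (by
      intro v; simp only [beval]
      cases beval v A <;> cases beval v B <;> cases beval v C <;> rfl)) h1) h2

/-- Lindenbaum's lemma. A theory maximal among those omitting `B` is maximal consistent. -/
theorem Theory.lindenbaum {T : Set BForm} (hT : Theory T) {B : BForm} (hB : B ∉ T) :
    ∃ M, MCS M ∧ T ⊆ M ∧ B ∉ M := by
  obtain ⟨M, hTM, ⟨hM, hBM⟩, hmax⟩ := zorn_subset_nonempty {S | Theory S ∧ B ∉ S} (by
    intro c hc hchain ⟨S₀, hS₀⟩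
    refine ⟨⋃₀ c, ⟨⟨fun hA => ⟨S₀, hS₀, (hc hS₀).1.thm hA⟩, ?_⟩, ?_⟩,
      fun s hs => Set.subset_sUnion_of_mem hs⟩
    · rintro C D ⟨S, hS, h1⟩ ⟨S', hS', h2⟩
      rcases hchain.total hS hS' with h | h
      · exact ⟨S', hS', (hc hS').1.mp (h h1) h2⟩
      · exact ⟨S, hS, (hc hS).1.mp h1 (h h2)⟩
    · rintro ⟨S, hS, h⟩
      exact (hc hS).2 h) T ⟨hT, hB⟩
  have key : ∀ C, C ∉ M → imp C B ∈ M := by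
    intro C hC
    by_contra hCB
    have hle : M ⊆ {D | imp C D ∈ M} := fun D hD =>
      hM.mp (hM.taut (A := imp D (imp C D)) (by
        intro v; simp only [beval]; cases beval v D <;> cases beval v C <;> rfl)) hD
    refine hC (hmax ⟨hM.adjoin C, hCB⟩ hle (?_ : imp C C ∈ M))
    exact hM.taut (by intro v; simp only [beval]; cases beval v C <;> rfl)
  refine ⟨M, ⟨hM, ?_, ?_⟩, hTM, hBM⟩
  · intro h
    exact hBM (hM.mp (hM.taut (by intro v; simp [beval])) h)
  · intro C
    by_contra! h
    refine hBM (hM.mp (hM.mp (hM.taut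
      (A := imp (imp C B) (imp (imp (neg C) B) B)) ?_) (key _ h.1)) (key _ h.2))
    intro v
    simp only [beval, neg]
    cases beval v B <;> cases beval v C <;> rfl

namespace MCS

variable {x y z : Set BForm}

theorem mem_imp (h : MCS x) {A B : BForm} : imp A B ∈ x ↔ (A ∈ x → B ∈ x) := by
  refine ⟨fun h1 => h.mp h1, fun h1 => ?_⟩
  rcases h.compl A with hA | hA
  · exact h.mp (h.taut (A := imp B (imp A B)) (by
      intro v; simp only [beval]; cases beval v A <;> cases beval v B <;> rfl)) (h1 hA)
  · exact h.mp (h.taut (A := imp (neg A) (imp A B)) (by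
      intro v; simp only [beval, neg]; cases beval v A <;> cases beval v B <;> rfl)) hA

theorem mem_neg (h : MCS x) {A : BForm} : neg A ∈ x ↔ A ∉ x := by
  simp only [neg, h.mem_imp, h.cons, imp_false]

theorem mem_conj (h : MCS x) {A B : BForm} : conj A B ∈ x ↔ A ∈ x ∧ B ∈ x := by
  simp only [conj, h.mem_neg, h.mem_imp, Classical.not_imp, not_not]

/-- Distinct maximal consistent theories are separated by a formula, and
neither one is contained in the other. -/
theorem exists_sep (hx : MCS x) (hy : MCS y) (hne : x ≠ y) : ∃ C ∈ x, C ∉ y := by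
  by_contra! h
  refine hne (Set.Subset.antisymm h fun C hC => ?_)
  by_contra hCx
  exact hy.mem_neg.1 (h _ (hx.mem_neg.2 hCx)) hC

/-- `[≠]` is monotone along tautological implications. -/
theorem dbox_mono (h : MCS x) {A B : BForm} (hAB : Tautology (imp A B)) (hA : dbox A ∈ x) :
    dbox B ∈ x :=
  h.mp (h.mp (h.thm (s4d_KD A B)) (h.thm (Logic.necD (Logic.taut hAB)))) hA

end MCS

/-! ### The canonical frame -/

/-- The canonical accessibility relation of `□`. -/
def canR (x y : Set BForm) : Prop := ∀ A, box A ∈ x → A ∈ y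

/-- The canonical accessibility relation of `[≠]`. -/
def canD (x y : Set BForm) : Prop := ∀ A, dbox A ∈ x → A ∈ y

section Canonical

variable {x y z : Set BForm}

theorem exists_canR (hx : MCS x) {B : BForm} (hB : box B ∉ x) : ∃ y, MCS y ∧ canR x y ∧ B ∉ y := by
  have hT : Theory {D | box D ∈ x} :=
    ⟨fun hA => hx.thm (Logic.necBox hA), fun h1 h2 => hx.mp (hx.mp (hx.thm (s4d_KBox _ _)) h1) h2⟩
  exact hT.lindenbaum hB

theorem exists_canD (hx : MCS x) {B : BForm} (hB : dbox B ∉ x) :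
    ∃ y, MCS y ∧ canD x y ∧ B ∉ y := by
  have hT : Theory {D | dbox D ∈ x} :=
    ⟨fun hA => hx.thm (Logic.necD hA), fun h1 h2 => hx.mp (hx.mp (hx.thm (s4d_KD _ _)) h1) h2⟩
  exact hT.lindenbaum hB

theorem canD_symm (hx : MCS x) (hy : MCS y) (h : canD x y) : canD y x := by
  intro A hA
  by_contra hAx
  have h1 := h _ (hx.mp (hx.thm (s4d_BD (neg A))) (hx.mem_neg.2 hAx))
  refine hy.mem_neg.1 h1 (hy.dbox_mono ?_ hA)
  intro v
  simp only [beval, neg]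
  cases beval v A <;> rfl

/-- `A` implies `A ∨ C`, with the disjunction written as `¬A → C`. -/
theorem taut_or (A C : BForm) : Tautology (imp A (imp (neg A) C)) := by
  intro v
  simp only [beval, neg]
  cases beval v A <;> cases beval v C <;> rfl

theorem canD_ptrans (hx : MCS x) (hz : MCS z) (h1 : canD x y) (h2 : canD y z)
    (hne : x ≠ z) : canD x z := by
  intro A hA
  obtain ⟨C, hCx, hCz⟩ := hx.exists_sep hz hne
  have h3 : imp (neg A) C ∈ x := hx.mem_imp.2 fun _ => hCx
  have h4 := hx.mp (hx.thm (s4d_4mD _)) (hx.mem_conj.2 ⟨h3, hx.dbox_mono (taut_or A C) hA⟩)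
  by_contra hAz
  exact hCz (hz.mp (h2 _ (h1 _ h4)) (hz.mem_neg.2 hAz))

theorem canR_inc (hx : MCS x) (hy : MCS y) (h : canR x y) (hne : x ≠ y) : canD x y := by
  intro A hA
  obtain ⟨C, hCx, hCy⟩ := hx.exists_sep hy hne
  have h3 : imp (neg A) C ∈ x := hx.mem_imp.2 fun _ => hCx
  have h4 := hx.mp (hx.thm (s4d_DBox _)) (hx.mem_conj.2 ⟨hx.dbox_mono (taut_or A C) hA, h3⟩)
  by_contra hAy
  exact hCy (hy.mp (h _ h4) (hy.mem_neg.2 hAy))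

/-- The subframe of the canonical frame generated by `x₀`. -/
def comp (x₀ : Set BForm) : Set (Set BForm) := {y | MCS y ∧ (y = x₀ ∨ canD x₀ y)}

variable {x₀ : Set BForm}

theorem comp_connected (h₀ : MCS x₀) (hx : x ∈ comp x₀) (hy : y ∈ comp x₀) (hne : x ≠ y) :
    canD x y := by
  obtain ⟨mx, rfl | hx⟩ := hx <;> obtain ⟨my, rfl | hy⟩ := hy
  · exact absurd rfl hne
  · exact hy
  · exact canD_symm h₀ mx hx
  · exact canD_ptrans mx my (canD_symm h₀ mx hx) hy hne

theorem comp_canD (h₀ : MCS x₀) (hx : x ∈ comp x₀) (hy : MCS y) (h : canD x y) :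
    y ∈ comp x₀ := by
  refine ⟨hy, ?_⟩
  by_cases hne : x₀ = y
  · exact Or.inl hne.symm
  · obtain ⟨_, rfl | hx⟩ := hx
    · exact Or.inr h
    · exact Or.inr (canD_ptrans h₀ hy hx h hne)

theorem comp_canR (h₀ : MCS x₀) (hx : x ∈ comp x₀) (hy : MCS y) (h : canR x y) :
    y ∈ comp x₀ := by
  by_cases hne : x = y
  · exact hne ▸ hx
  · exact comp_canD h₀ hx hy (canR_inc hx.1 hy h hne)

end Canonical

/-! ### Filtration -/

/-- The set of subformulas of a formula. -/
def subf : BForm → Set BForm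
  | .var n => {.var n}
  | .bot => {.bot}
  | .imp A B => insert (.imp A B) (subf A ∪ subf B)
  | .box A => insert (.box A) (subf A)
  | .dbox A => insert (.dbox A) (subf A)

theorem subf_finite (A : BForm) : (subf A).Finite := by
  induction A with
  | var n => exact Set.finite_singleton _
  | bot => exact Set.finite_singleton _
  | imp A B ihA ihB => exact (ihA.union ihB).insert _
  | box A ih => exact ih.insert _
  | dbox A ih => exact ih.insert _

theorem mem_subf_self (A : BForm) : A ∈ subf A := by
  cases A <;> simp [subf]

/-- Points of the filtration of `comp x₀` through `Γ`: a class of `Γ`-equivalent theories is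
represented by their common trace on `Γ`. -/
def Filt (x₀ Γ : Set BForm) : Type := {s : Set BForm // ∃ x ∈ comp x₀, x ∩ Γ = s}

/-- The Lemmon filtration of the canonical relation of `□`. -/
def filtR {x₀ Γ : Set BForm} (s t : Filt x₀ Γ) : Prop := ∀ A, box A ∈ s.1 → box A ∈ t.1

/-- The minimal filtration of the canonical relation of `[≠]`. -/
def filtD {x₀ Γ : Set BForm} (s t : Filt x₀ Γ) : Prop :=
  ∃ x ∈ comp x₀, ∃ y ∈ comp x₀, x ∩ Γ = s.1 ∧ y ∩ Γ = t.1 ∧ canD x y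

/-- The valuation of the filtration. -/
def filtVal (x₀ Γ : Set BForm) (n : ℕ) : Set (Filt x₀ Γ) := {s | var n ∈ s.1}

theorem filt_finite {x₀ Γ : Set BForm} (hΓ : Γ.Finite) : Finite (Filt x₀ Γ) := by
  refine Set.Finite.subset (t := {s | ∃ x ∈ comp x₀, x ∩ Γ = s}) hΓ.finite_subsets ?_
  rintro _ ⟨x, _, rfl⟩
  exact Set.inter_subset_right

theorem filtD_of_ne {x₀ Γ : Set BForm} (h₀ : MCS x₀) {s t : Filt x₀ Γ} (hne : s ≠ t) :
    filtD s t := by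
  obtain ⟨s, x, hx, rfl⟩ := s
  obtain ⟨t, y, hy, rfl⟩ := t
  refine ⟨x, hx, y, hy, rfl, rfl, comp_connected h₀ hx hy ?_⟩
  rintro rfl
  exact hne rfl

theorem filt_isS4DFrame {x₀ Γ : Set BForm} (h₀ : MCS x₀) :
    IsS4DFrame (filtR (x₀ := x₀) (Γ := Γ)) filtD where
  refl _ _ h := h
  trans _ _ _ h1 h2 A hA := h2 A (h1 A hA)
  symm := by
    rintro s t ⟨x, hx, y, hy, h1, h2, h⟩
    exact ⟨y, hy, x, hx, h2, h1, canD_symm hx.1 hy.1 h⟩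
  ptrans _ _ _ _ _ hne := filtD_of_ne h₀ hne
  inc s t _ := by
    by_cases h : s = t
    · exact Or.inr h
    · exact Or.inl (filtD_of_ne h₀ h)

theorem filt_truth {x₀ Γ : Set BForm} (h₀ : MCS x₀) (B : BForm) (hB : subf B ⊆ Γ) :
    ∀ s : Filt x₀ Γ, ksat filtR filtD (filtVal x₀ Γ) s B ↔ B ∈ s.1 := by
  have hBΓ : B ∈ Γ := hB (mem_subf_self B)
  induction B with
  | var n => intro s; rfl
  | bot =>
    rintro ⟨_, x, hx, rfl⟩
    exact iff_of_false id fun h => hx.1.cons h.1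
  | imp C D ihC ihD =>
    have hC : subf C ⊆ Γ := fun E hE => hB (Or.inr (Or.inl hE))
    have hD : subf D ⊆ Γ := fun E hE => hB (Or.inr (Or.inr hE))
    have hCΓ := hC (mem_subf_self C)
    have hDΓ := hD (mem_subf_self D)
    rintro ⟨_, x, hx, rfl⟩
    have h1 := ihC hC hCΓ ⟨x ∩ Γ, x, hx, rfl⟩
    have h2 := ihD hD hDΓ ⟨x ∩ Γ, x, hx, rfl⟩
    simp only [Set.mem_inter_iff, hCΓ, hDΓ, and_true] at h1 h2
    refine (imp_congr h1 h2).trans ?_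
    simp only [Set.mem_inter_iff, hBΓ, and_true, hx.1.mem_imp]
  | box C ih =>
    have hC : subf C ⊆ Γ := fun E hE => hB (Or.inr hE)
    have hCΓ := hC (mem_subf_self C)
    rintro ⟨_, x, hx, rfl⟩
    simp only [ksat, ih hC hCΓ]
    constructor
    · intro h
      refine ⟨?_, hBΓ⟩
      by_contra hbox
      obtain ⟨y, my, hxy, hCy⟩ := exists_canR hx.1 hbox
      refine hCy (h ⟨y ∩ Γ, y, comp_canR h₀ hx my hxy, rfl⟩ fun E hE => ?_).1
      exact ⟨hxy _ (hx.1.mp (hx.1.thm (s4d_4Box E)) hE.1), hE.2⟩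
    · rintro h ⟨_, y, hy, rfl⟩ hR
      exact ⟨hy.1.mp (hy.1.thm (s4d_TBox C)) (hR C h).1, hCΓ⟩
  | dbox C ih =>
    have hC : subf C ⊆ Γ := fun E hE => hB (Or.inr hE)
    have hCΓ := hC (mem_subf_self C)
    rintro ⟨_, x, hx, rfl⟩
    simp only [ksat, ih hC hCΓ]
    constructor
    · intro h
      refine ⟨?_, hBΓ⟩
      by_contra hbox
      obtain ⟨y, my, hxy, hCy⟩ := exists_canD hx.1 hbox
      have hy := comp_canD h₀ hx my hxy
      exact hCy (h ⟨y ∩ Γ, y, hy, rfl⟩ ⟨x, hx, y, hy, rfl, rfl, hxy⟩).1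
    · rintro h t ⟨x', _, y', _, h1, h2, hxy⟩
      have h3 : dbox C ∈ x' ∩ Γ := by rw [h1]; exact h
      rw [← h2]
      exact ⟨hxy C h3.1, hCΓ⟩

/-- finite model property of S4D: `A ∈ S4D` iff `A` is valid in every
finite S4D-frame. -/
theorem s4d_fmp (A : BForm) :
    S4D A ↔ ∀ (W : Type) (R RD : W → W → Prop), Finite W → IsS4DFrame R RD →
      kvalid R RD A := by
  refine ⟨fun h W R RD _ hF => s4d_sound hF h, fun h => ?_⟩
  by_contra hA
  have hT : Theory {B | S4D B} := ⟨id, fun h1 h2 => Logic.mp h1 h2⟩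
  obtain ⟨x₀, h₀, -, hAx⟩ := hT.lindenbaum hA
  have hval := h (Filt x₀ (subf A)) filtR filtD (filt_finite (subf_finite A))
    (filt_isS4DFrame h₀) (filtVal x₀ (subf A)) ⟨x₀ ∩ subf A, x₀, ⟨h₀, Or.inl rfl⟩, rfl⟩
  exact hAx ((filt_truth h₀ A subset_rfl _).1 hval).1
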